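/- Let $1<\alpha<\infty$ and $0<p<\infty$. For real $\varepsilon$, let $f_\varepsilon(z)=1+\varepsilon z$. Then as $\varepsilon\to 0$, $\|f_\varepsilon\|_{A_\alpha^p(\mathbb{D})}=1+\frac{p}{4\alpha}\varepsilon^2+O(\varepsilon^3)$; that is, the function $\varepsilon\mapsto \|1+\varepsilon z\|_{A_\alpha^p(\mathbb{D})}-1-\frac{p}{4\alpha}\varepsilon^2$ is $O(\varepsilon^3)$ as $\varepsilon\to 0$. -/

import Mathlib

open MeasureTheory Metric Asymptotics

/-- The weighted Bergman measure `dA_α(z) = (α-1)(1-|z|²)^(α-2) dA(z)` on the unit disk,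
where `dA = dx dy / π` is the normalized area measure. -/
noncomputable def bergmanMeasure (α : ℝ) : Measure ℂ :=
  ((volume : Measure ℂ).restrict (ball (0 : ℂ) 1)).withDensity
    fun z => ENNReal.ofReal ((α - 1) * (1 - ‖z‖ ^ 2) ^ (α - 2) / Real.pi)

/-!
With `a = p / 2` and `‖1 + w‖ ^ 2 = 1 + 2 Re w + ‖w‖ ^ 2`, the binomial series gives
`‖1 + w‖ ^ p = 1 + a ^ 2 ‖w‖ ^ 2 + Re (2 a w + a (a - 1) w ^ 2) + O(‖w‖ ^ 3)`.
Put `w = ε z` and integrate over the disk: a rotation-invariant measure annihilates `z` and `z ^ 2`,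
so only the second moment survives, and it equals `1 / α` for the Bergman measure. Taking the power
`1 / p` then multiplies the coefficient `p ^ 2 / (4 α)` by `1 / p`.
-/

open Filter Finset Topology

section Taylor

theorem isBigO_one_add_rpow_sub_sum (a : ℝ) (n : ℕ) :
    (fun u : ℝ => (1 + u) ^ a - ∑ k ∈ range n, Ring.choose a k * u ^ k) =O[𝓝 0] (· ^ n) := by
  have h := (Real.one_add_rpow_hasFPowerSeriesAt_zero (a := a)).isBigO_sub_partialSum_pow n
  refine (h.congr_left fun u => ?_).trans (isBigO_of_le _ fun u => by simp)
  simp [-FormalMultilinearSeries.apply_eq_prod_smul_coeff, FormalMultilinearSeries.partialSum]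

theorem ringChoose_two (a : ℝ) : Ring.choose a 2 = a * (a - 1) / 2 := by
  rw [Ring.choose_eq_smul, ← Polynomial.aeval_eq_smeval]
  simp only [Nat.factorial_two, descPochhammer_succ_right, descPochhammer_zero, map_mul, map_one,
    Polynomial.aeval_X, Polynomial.aeval_sub, Nat.cast_ofNat, Nat.cast_zero, Nat.cast_one,
    smul_eq_mul, sub_zero, one_mul]
  ring

theorem norm_one_add_rpow (p : ℝ) (w : ℂ) :
    ‖1 + w‖ ^ p = (1 + (2 * w.re + ‖w‖ ^ 2)) ^ (p / 2) := by
  have h : 1 + (2 * w.re + ‖w‖ ^ 2) = ‖1 + w‖ ^ (2 : ℝ) := by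
    rw [Real.rpow_two, Complex.sq_norm, Complex.sq_norm, Complex.normSq_add]
    simp only [map_one, one_mul, Complex.conj_re]
    ring
  rw [h, ← Real.rpow_mul (norm_nonneg _), mul_div_cancel₀ p two_ne_zero]

theorem isBigO_norm_one_add_rpow_sub (p : ℝ) :
    (fun w : ℂ => ‖1 + w‖ ^ p
        - (1 + p ^ 2 / 4 * ‖w‖ ^ 2 + p * w.re + p * (p - 2) / 4 * (w ^ 2).re))
      =O[𝓝 0] fun w => ‖w‖ ^ 3 := by
  set u : ℂ → ℝ := fun w => 2 * w.re + ‖w‖ ^ 2 with hu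
  have hre : Complex.re =O[𝓝 0] fun w => ‖w‖ :=
    .of_norm_le fun w => Complex.abs_re_le_norm w
  have hnorm : (fun w : ℂ => ‖w‖) =O[𝓝 0] fun _ => (1 : ℝ) :=
    continuous_norm.continuousAt.norm.isBoundedUnder_le.isBigO_one ℝ
  have hsq : (fun w : ℂ => ‖w‖ ^ 2) =O[𝓝 0] fun w => ‖w‖ := by
    simpa [sq] using (isBigO_refl (fun w : ℂ => ‖w‖) (𝓝 0)).mul hnorm
  have hu_isBigO : u =O[𝓝 0] fun w => ‖w‖ := (hre.const_mul_left 2).add hsq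
  have hu_tendsto : Tendsto u (𝓝 0) (𝓝 0) :=
    Continuous.tendsto' (by fun_prop) _ _ (by simp [hu])
  have hbinom := ((isBigO_one_add_rpow_sub_sum (p / 2) 3).comp_tendsto hu_tendsto).trans
    (hu_isBigO.pow 3)
  have hu_sq : (fun w => u w ^ 2 - 4 * w.re ^ 2) =O[𝓝 0] fun w => ‖w‖ ^ 3 :=
    (((hre.const_mul_left 4).add hsq).mul (isBigO_refl (fun w : ℂ => ‖w‖ ^ 2) _)).congr
      (fun w => by simp only [hu]; ring) (fun w => by ring)
  refine (hbinom.add (hu_sq.const_mul_left (p / 2 * (p / 2 - 1) / 2))).congr_left fun w => ?_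
  have hw : ‖w‖ ^ 2 = w.re ^ 2 + w.im ^ 2 := by rw [Complex.sq_norm, Complex.normSq_apply]; ring
  have hw_sq : (w ^ 2).re = w.re ^ 2 - w.im ^ 2 := by simp [sq]
  simp only [Function.comp_apply, sum_range_succ, sum_range_zero, Ring.choose_zero_right,
    Ring.choose_one_right, ringChoose_two, norm_one_add_rpow, hw_sq, hw, hu]
  ring

theorem isBigO_rpow_sub_of_isBigO_sub {f : ℝ → ℝ} {c : ℝ}
    (hf : (fun ε => f ε - 1 - c * ε ^ 2) =O[𝓝 0] fun ε => ε ^ 3) (q : ℝ) :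
    (fun ε => f ε ^ q - 1 - q * c * ε ^ 2) =O[𝓝 0] fun ε => ε ^ 3 := by
  have hpow {m n : ℕ} (h : m < n) : (fun ε : ℝ => ε ^ n) =O[𝓝 0] fun ε => ε ^ m :=
    (isLittleO_pow_pow h).isBigO
  have hf_sq : (fun ε => f ε - 1) =O[𝓝 0] fun ε : ℝ => ε ^ 2 :=
    ((hf.trans (hpow (by norm_num))).add (isBigO_const_mul_self c _ _)).congr_left fun ε => by ring
  have hf_tendsto : Tendsto (fun ε => f ε - 1) (𝓝 0) (𝓝 0) :=
    hf_sq.trans_tendsto (Continuous.tendsto' (by fun_prop) _ _ (by simp))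
  have hbinom := ((isBigO_one_add_rpow_sub_sum q 2).comp_tendsto hf_tendsto).trans
    ((hf_sq.pow 2).congr_right fun ε => (pow_mul ε 2 2).symm)
  refine ((hbinom.trans (hpow (by norm_num))).add (hf.const_mul_left q)).congr_left fun ε => ?_
  simp only [Function.comp_apply, add_sub_cancel, sum_range_succ, sum_range_zero,
    Ring.choose_zero_right, Ring.choose_one_right]
  ring

end Taylor

section BoundedSupport

variable {E F : Type*} [NormedAddCommGroup E] [MeasurableSpace E] [NormedAddCommGroup F]
  {μ : Measure E} {R : ℝ}

theorem eventually_ae_smul_of_eventually_nhds_zero [NormedSpace ℝ E] (hμ : ∀ᵐ z ∂μ, ‖z‖ ≤ R)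
    {P : E → Prop} (hP : ∀ᶠ w in 𝓝 0, P w) : ∀ᶠ ε : ℝ in 𝓝 0, ∀ᵐ z ∂μ, P (ε • z) := by
  obtain ⟨δ, hδ, hball⟩ := Metric.eventually_nhds_iff.1 hP
  have hlim : Tendsto (fun ε : ℝ => ‖ε‖ * R) (𝓝 0) (𝓝 0) :=
    Continuous.tendsto' (by fun_prop) _ _ (by simp)
  filter_upwards [hlim.eventually_lt_const hδ] with ε hε
  filter_upwards [hμ] with z hz
  refine hball ?_
  rw [dist_zero_right, norm_smul]
  exact (by gcongr : ‖ε‖ * ‖z‖ ≤ ‖ε‖ * R).trans_lt hε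

variable [IsFiniteMeasure μ]

theorem isBigO_integral_comp_smul [NormedSpace ℝ E] [NormedSpace ℝ F] (hμ : ∀ᵐ z ∂μ, ‖z‖ ≤ R)
    {f : E → F} {n : ℕ} (hf : f =O[𝓝 0] fun w => ‖w‖ ^ n) :
    (fun ε : ℝ => ∫ z, f (ε • z) ∂μ) =O[𝓝 0] fun ε => ε ^ n := by
  obtain ⟨C, hC, hbound⟩ := hf.exists_nonneg
  refine .of_bound (C * R ^ n * μ.real Set.univ) ?_
  filter_upwards [eventually_ae_smul_of_eventually_nhds_zero hμ hbound.bound] with ε hε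
  have hle : ∀ᵐ z ∂μ, ‖f (ε • z)‖ ≤ C * R ^ n * ‖ε ^ n‖ := by
    filter_upwards [hε, hμ] with z hz hzR
    calc ‖f (ε • z)‖ ≤ C * (‖ε‖ * ‖z‖) ^ n := by simpa [norm_smul] using hz
      _ ≤ C * (‖ε‖ * R) ^ n := by gcongr
      _ = C * R ^ n * ‖ε ^ n‖ := by rw [norm_pow]; ring
  exact (norm_integral_le_of_norm_le_const hle).trans_eq (by ring)

theorem eventually_integrable_comp_smul [NormedSpace ℝ E] [BorelSpace E]
    (hμ : ∀ᵐ z ∂μ, ‖z‖ ≤ R) {f : E → F} (hf : StronglyMeasurable f) (hf₀ : ContinuousAt f 0) :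
    ∀ᶠ ε : ℝ in 𝓝 0, Integrable (fun z => f (ε • z)) μ := by
  have hbound : ∀ᶠ w in 𝓝 0, ‖f w‖ ≤ ‖f 0‖ + 1 :=
    hf₀.norm.eventually_le_const (lt_add_one _)
  filter_upwards [eventually_ae_smul_of_eventually_nhds_zero hμ hbound] with ε hε
  exact .of_bound (hf.comp_measurable (measurable_const_smul ε)).aestronglyMeasurable _ hε

theorem integrable_of_continuous_of_ae_norm_le [ProperSpace E] [BorelSpace E]
    (hμ : ∀ᵐ z ∂μ, ‖z‖ ≤ R) {f : E → F} (hf : Continuous f) : Integrable f μ := by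
  obtain ⟨C, hC⟩ := (isCompact_closedBall (0 : E) R).exists_bound_of_continuousOn hf.continuousOn
  exact .of_bound hf.aestronglyMeasurable C (hμ.mono fun z hz => hC z (by simpa using hz))

end BoundedSupport

section CenteredMeasure

variable {μ : Measure ℂ} [IsProbabilityMeasure μ] {R : ℝ}

theorem isBigO_integral_norm_one_add_mul_rpow (hμ : ∀ᵐ z ∂μ, ‖z‖ ≤ R) (h₁ : ∫ z, z ∂μ = 0)
    (h₂ : ∫ z, z ^ 2 ∂μ = 0) (p : ℝ) :
    (fun ε : ℝ => ∫ z, ‖1 + (ε : ℂ) * z‖ ^ p ∂μ - 1 - p ^ 2 / 4 * (∫ z, ‖z‖ ^ 2 ∂μ) * ε ^ 2)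
      =O[𝓝 0] fun ε => ε ^ 3 := by
  have hint {G : Type} [NormedAddCommGroup G] {f : ℂ → G} (hf : Continuous f) : Integrable f μ :=
    integrable_of_continuous_of_ae_norm_le hμ hf
  have hint_rpow : ∀ᶠ ε : ℝ in 𝓝 0, Integrable (fun z : ℂ => ‖1 + ε • z‖ ^ p) μ :=
    eventually_integrable_comp_smul (f := fun w : ℂ => ‖1 + w‖ ^ p) hμ
      (by fun_prop : Measurable _).stronglyMeasurable
      (ContinuousAt.rpow_const (by fun_prop) (by simp))
  refine (isBigO_integral_comp_smul hμ (isBigO_norm_one_add_rpow_sub p)).congr' ?_ .rfl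
  filter_upwards [hint_rpow] with ε hε
  have hlin : ∫ z, (ε • z).re ∂μ = 0 := by
    simp only [Complex.smul_re, smul_eq_mul, integral_const_mul]
    rw [← RCLike.re_eq_complex_re, integral_re (hint continuous_id'), h₁, map_zero, mul_zero]
  have hquad : ∫ z, ((ε • z) ^ 2).re ∂μ = 0 := by
    simp only [smul_pow, Complex.smul_re, smul_eq_mul, integral_const_mul]
    rw [← RCLike.re_eq_complex_re, integral_re (hint (by fun_prop)), h₂, map_zero, mul_zero]
  have hnorm : ∫ z, ‖ε • z‖ ^ 2 ∂μ = ε ^ 2 * ∫ z, ‖z‖ ^ 2 ∂μ := by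
    simp only [norm_smul, mul_pow, Real.norm_eq_abs, sq_abs, integral_const_mul]
  rw [integral_sub hε (hint (by fun_prop)), integral_add (hint (by fun_prop)) (hint (by fun_prop)),
    integral_add (hint (by fun_prop)) (hint (by fun_prop)),
    integral_add (hint (by fun_prop)) (hint (by fun_prop))]
  simp only [integral_const_mul, hlin, hquad, hnorm, integral_const, probReal_univ, one_smul]
  simp only [Complex.real_smul]
  ring

theorem isBigO_integral_norm_one_add_mul_rpow_rpow (hμ : ∀ᵐ z ∂μ, ‖z‖ ≤ R)
    (h₁ : ∫ z, z ∂μ = 0) (h₂ : ∫ z, z ^ 2 ∂μ = 0) (p q : ℝ) :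
    (fun ε : ℝ => (∫ z, ‖1 + (ε : ℂ) * z‖ ^ p ∂μ) ^ q
        - 1 - q * (p ^ 2 / 4 * ∫ z, ‖z‖ ^ 2 ∂μ) * ε ^ 2)
      =O[𝓝 0] fun ε => ε ^ 3 :=
  isBigO_rpow_sub_of_isBigO_sub (isBigO_integral_norm_one_add_mul_rpow hμ h₁ h₂ p) q

end CenteredMeasure

section Rotation

theorem measurePreserving_withDensity_comp {X Y : Type*} [MeasurableSpace X] [MeasurableSpace Y]
    {μ : Measure X} {ν : Measure Y} {φ : X → Y} (hφ : MeasurePreserving φ μ ν)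
    {g : Y → ENNReal} (hg : Measurable g) :
    MeasurePreserving φ (μ.withDensity (g ∘ φ)) (ν.withDensity g) := by
  refine ⟨hφ.measurable, Measure.ext fun s hs => ?_⟩
  rw [Measure.map_apply hφ.measurable hs, withDensity_apply _ (hφ.measurable hs),
    withDensity_apply _ hs]
  exact hφ.setLIntegral_comp_preimage hs hg

theorem integral_pow_eq_zero_of_measurePreserving_rotation {μ : Measure ℂ}
    (hμ : ∀ c : Circle, MeasurePreserving (rotation c) μ μ) {n : ℕ} (hn : n ≠ 0) :
    ∫ z, z ^ n ∂μ = 0 := by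
  set c := Circle.exp (Real.pi / n)
  have hc : (c : ℂ) ^ n = -1 := by
    rw [Circle.coe_exp, ← Complex.exp_nat_mul, ← Complex.exp_pi_mul_I]
    push_cast
    field_simp
  have h : ∫ z, (rotation c z) ^ n ∂μ = ∫ z, z ^ n ∂μ :=
    (hμ c).integral_comp (rotation c).toHomeomorph.measurableEmbedding (· ^ n)
  simp only [rotation_apply, mul_pow, hc, neg_one_mul, integral_neg] at h
  exact self_eq_neg.1 h.symm

end Rotation

section Radial

theorem integral_mul_one_sub_sq_rpow {β : ℝ} (hβ : 0 < β) :
    ∫ r in (0 : ℝ)..1, r * (1 - r ^ 2) ^ (β - 1) = 1 / (2 * β) := by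
  have hderiv (r : ℝ) : HasDerivAt (fun r : ℝ => 1 - r ^ 2) (-(2 * r)) r := by
    simpa using (hasDerivAt_pow 2 r).const_sub 1
  have hsubst : ∫ r in (0 : ℝ)..1, (1 - r ^ 2) ^ (β - 1) * -(2 * r)
      = ∫ t in (1 : ℝ)..0, t ^ (β - 1) := by
    have h := intervalIntegral.integral_comp_mul_deriv_of_deriv_nonpos (a := 0) (b := 1)
      (g := fun t : ℝ => t ^ (β - 1)) (by fun_prop) (fun r _ => hderiv r)
      (fun r hr => by simpa using (min_eq_left (zero_le_one' ℝ) ▸ hr.1).le)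
    simpa using h
  have hfactor (r : ℝ) :
      r * (1 - r ^ 2) ^ (β - 1) = -(1 / 2) * ((1 - r ^ 2) ^ (β - 1) * -(2 * r)) := by
    ring
  simp only [hfactor, intervalIntegral.integral_const_mul, hsubst,
    integral_rpow (Or.inl (by linarith : -1 < β - 1)), sub_add_cancel, Real.one_rpow,
    Real.zero_rpow hβ.ne']
  field_simp
  ring

theorem setIntegral_ball_fun_norm {F : Type*} [NormedAddCommGroup F] [NormedSpace ℝ F]
    (g : ℝ → F) {R : ℝ} (hR : 0 ≤ R) :
    ∫ z in ball (0 : ℂ) R, g ‖z‖ = (2 * Real.pi) • ∫ r in (0 : ℝ)..R, r • g r := by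
  have hball : (ball (0 : ℂ) R).indicator (fun z => g ‖z‖)
      = fun z => (Set.Iio R).indicator g ‖z‖ := by
    ext z
    by_cases hz : ‖z‖ < R <;> simp [hz]
  have hsmul : (fun r : ℝ => r • (Set.Iio R).indicator g r)
      = (Set.Iio R).indicator fun r => r • g r := by
    ext r
    simp [Set.indicator_apply]
  rw [← integral_indicator measurableSet_ball, hball, integral_fun_norm_addHaar]
  simp only [Complex.finrank_real_complex, Nat.add_one_sub_one, pow_one, hsmul]
  rw [setIntegral_indicator measurableSet_Iio, Set.Ioi_inter_Iio,
    intervalIntegral.integral_of_le hR, integral_Ioc_eq_integral_Ioo]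
  simp [measureReal_def, mul_smul, ofNat_smul_eq_nsmul]

end Radial

section Bergman

theorem ae_norm_lt_one_bergmanMeasure (α : ℝ) : ∀ᵐ z ∂(bergmanMeasure α), ‖z‖ < 1 := by
  refine (withDensity_absolutelyContinuous _ _).ae_le ?_
  filter_upwards [ae_restrict_mem measurableSet_ball] with z hz
  simpa using hz

theorem measurePreserving_linearIsometryEquiv_bergmanMeasure (α : ℝ) (L : ℂ ≃ₗᵢ[ℝ] ℂ) :
    MeasurePreserving L (bergmanMeasure α) (bergmanMeasure α) := by
  have hball : L ⁻¹' ball 0 1 = ball 0 1 := by simp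
  have h := L.measurePreserving.restrict_preimage (measurableSet_ball (x := 0) (ε := 1))
  rw [hball] at h
  simpa [Function.comp_def, bergmanMeasure] using measurePreserving_withDensity_comp h
    (g := fun z => ENNReal.ofReal ((α - 1) * (1 - ‖z‖ ^ 2) ^ (α - 2) / Real.pi)) (by fun_prop)

theorem integral_pow_bergmanMeasure (α : ℝ) {n : ℕ} (hn : n ≠ 0) :
    ∫ z, z ^ n ∂(bergmanMeasure α) = 0 :=
  integral_pow_eq_zero_of_measurePreserving_rotation
    (fun c => measurePreserving_linearIsometryEquiv_bergmanMeasure α (rotation c)) hn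

variable {α : ℝ}

theorem integral_fun_norm_bergmanMeasure (hα : 1 ≤ α) (g : ℝ → ℝ) :
    ∫ z, g ‖z‖ ∂(bergmanMeasure α)
      = 2 * (α - 1) * ∫ r in (0 : ℝ)..1, r * ((1 - r ^ 2) ^ (α - 2) * g r) := by
  have hdensity {z : ℂ} (hz : z ∈ ball (0 : ℂ) 1) :
      0 ≤ (α - 1) * (1 - ‖z‖ ^ 2) ^ (α - 2) / Real.pi := by
    have hz' : 0 ≤ 1 - ‖z‖ ^ 2 :=
      sub_nonneg.2 (pow_le_one₀ (norm_nonneg z) (mem_ball_zero_iff.1 hz).le)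
    have := sub_nonneg.2 hα
    positivity
  rw [bergmanMeasure, integral_withDensity_eq_integral_toReal_smul (by fun_prop)
    (.of_forall fun _ => ENNReal.ofReal_lt_top)]
  calc ∫ z in ball (0 : ℂ) 1,
        (ENNReal.ofReal ((α - 1) * (1 - ‖z‖ ^ 2) ^ (α - 2) / Real.pi)).toReal • g ‖z‖
      = ∫ z in ball (0 : ℂ) 1, (α - 1) * (1 - ‖z‖ ^ 2) ^ (α - 2) / Real.pi * g ‖z‖ :=
        setIntegral_congr_fun measurableSet_ball fun z hz => by
          simp [ENNReal.toReal_ofReal (hdensity hz)]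
    _ = 2 * Real.pi * ∫ r in (0 : ℝ)..1, r * ((α - 1) * (1 - r ^ 2) ^ (α - 2) / Real.pi * g r) :=
        setIntegral_ball_fun_norm
          (fun r => (α - 1) * (1 - r ^ 2) ^ (α - 2) / Real.pi * g r) zero_le_one
    _ = 2 * (α - 1) * ∫ r in (0 : ℝ)..1, r * ((1 - r ^ 2) ^ (α - 2) * g r) := by
        simp only [← intervalIntegral.integral_const_mul]
        congr! 2 with r
        field_simp

theorem integral_one_sub_norm_sq_rpow_bergmanMeasure (hα : 1 ≤ α) {s : ℝ} (hs : 1 - α < s) :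
    ∫ z, (1 - ‖z‖ ^ 2) ^ s ∂(bergmanMeasure α) = (α - 1) / (α - 1 + s) := by
  have hβ : 0 < α - 1 + s := by linarith
  rw [integral_fun_norm_bergmanMeasure hα fun r => (1 - r ^ 2) ^ s]
  have hadd : Set.EqOn (fun r : ℝ => r * ((1 - r ^ 2) ^ (α - 2) * (1 - r ^ 2) ^ s))
      (fun r => r * (1 - r ^ 2) ^ (α - 1 + s - 1)) (Set.Ioo 0 1) := by
    intro r hr
    have hr' : 0 < 1 - r ^ 2 := sub_pos.2 (pow_lt_one₀ hr.1.le hr.2 two_ne_zero)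
    simp only [← Real.rpow_add hr']
    ring_nf
  rw [intervalIntegral.integral_congr_Ioo_of_le zero_le_one hadd, integral_mul_one_sub_sq_rpow hβ]
  field_simp

theorem isProbabilityMeasure_bergmanMeasure (hα : 1 < α) :
    IsProbabilityMeasure (bergmanMeasure α) := by
  have h := integral_one_sub_norm_sq_rpow_bergmanMeasure hα.le (s := 0) (by linarith)
  have hα' := (sub_pos.2 hα).ne'
  exact ⟨by simpa [measureReal_def, hα', ENNReal.toReal_eq_one_iff] using h⟩

theorem integral_norm_sq_bergmanMeasure (hα : 1 < α) :
    ∫ z, ‖z‖ ^ 2 ∂(bergmanMeasure α) = 1 / α := by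
  have := isProbabilityMeasure_bergmanMeasure hα
  have hα₀ : α ≠ 0 := by linarith
  have hint : Integrable (fun z : ℂ => ‖z‖ ^ 2) (bergmanMeasure α) :=
    integrable_of_continuous_of_ae_norm_le
      ((ae_norm_lt_one_bergmanMeasure α).mono fun z hz => hz.le) (by fun_prop)
  have h := integral_one_sub_norm_sq_rpow_bergmanMeasure hα.le (s := 1) (by linarith)
  simp only [Real.rpow_one, sub_add_cancel] at h
  rw [integral_sub (integrable_const 1) hint] at h
  simp only [integral_const, probReal_univ, smul_eq_mul, mul_one] at h
  field_simp at h ⊢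
  linarith

end Bergman

theorem norm_one_add_eps_expansion_general {α p : ℝ} (hα : 1 < α) (hp : p ≠ 0) :
    (fun ε : ℝ =>
        (∫ z, ‖(1 : ℂ) + (ε : ℂ) * z‖ ^ p ∂(bergmanMeasure α)) ^ (1 / p)
          - 1 - p / (4 * α) * ε ^ 2)
      =O[𝓝 0] fun ε : ℝ => ε ^ 3 := by
  have := isProbabilityMeasure_bergmanMeasure hα
  have hmean : ∫ z, z ∂(bergmanMeasure α) = 0 := by
    simpa using integral_pow_bergmanMeasure α one_ne_zero
  have hbound : ∀ᵐ z ∂(bergmanMeasure α), ‖z‖ ≤ 1 :=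
    (ae_norm_lt_one_bergmanMeasure α).mono fun z hz => hz.le
  refine (isBigO_integral_norm_one_add_mul_rpow_rpow hbound hmean
    (integral_pow_bergmanMeasure α two_ne_zero) p (1 / p)).congr_left fun ε => ?_
  have hcoeff : 1 / p * (p ^ 2 / 4 * (1 / α)) = p / (4 * α) :=
    calc 1 / p * (p ^ 2 / 4 * (1 / α)) = p⁻¹ * (p * (p / (4 * α))) := by ring
      _ = p / (4 * α) := inv_mul_cancel_left₀ hp _
  rw [integral_norm_sq_bergmanMeasure hα, hcoeff]

/-- Lemma 2.1: for `f_ε(z) = 1 + εz`, one has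
`‖f_ε‖_{A_α^p} = 1 + (p/(4α)) ε² + O(ε³)` as `ε → 0`. -/
theorem norm_one_add_eps_expansion
    (α p : ℝ) (hα : 1 < α) (hp : 0 < p) :
    (fun ε : ℝ =>
        (∫ z, ‖(1 : ℂ) + (ε : ℂ) * z‖ ^ p ∂(bergmanMeasure α)) ^ (1 / p)
          - 1 - p / (4 * α) * ε ^ 2)
      =O[nhds 0] fun ε : ℝ => ε ^ 3 :=
  norm_one_add_eps_expansion_general hα hp.ne'
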